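/- arXiv:0803.2428 — 3 statements merged into one kernel-verified Lean document; each statement's English description precedes it below -/
import Mathlib

section
/- Let f be a homeomorphism of 𝕋^d homotopic to the identity with lift F, and let K ⊆ 𝕋^d be a minimal set of f. Suppose there exist an integer vector v ∈ ℤ^d \ {0} with gcd(v₁,…,v_d) = 1 and an irrational number ρ₀ ∈ ℝ \ ℚ such that the rotation set ρ_K(F) is contained in the affine hyperplane (ρ₀/‖v‖²)·v + {v}^⊥, and that f has bounded mean motion parallel to v on K. Then f restricted to K is semi-conjugate to the one-dimensional irrational rotation r_{ρ₀} : 𝕋¹ → 𝕋¹, x ↦ x + ρ₀ mod 1, and the semi-conjugacy is regular with respect to some 1×d integer matrix B: there is a continuous surjection h : K → 𝕋¹ with h∘f = r_{ρ₀}∘h on K admitting a lift H : π⁻¹(K) → ℝ with H∘F = H + ρ₀ and sup_{z ∈ π⁻¹(K)} |H(z) − Bz| < ∞. -/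
open Filter Topology

local notation "⟪" x ", " y "⟫" => @inner ℝ _ _ x y

noncomputable section

/-- Euclidean space `ℝ^d`. -/
abbrev Rd (d : ℕ) := EuclideanSpace ℝ (Fin d)

/-- The `d`-torus `𝕋^d = ℝ^d/ℤ^d`, realized as a product of circles. -/
abbrev Torus (d : ℕ) := Fin d → AddCircle (1 : ℝ)

/-- The quotient map `π : ℝ^d → 𝕋^d`. -/
def projT {d : ℕ} (z : Rd d) : Torus d := fun i => (z i : AddCircle (1 : ℝ))

/-- An integer vector viewed as an element of `ℝ^d`. -/
def intVec {d : ℕ} (m : Fin d → ℤ) : Rd d := WithLp.toLp 2 (fun i => (m i : ℝ))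

/-- A real vector viewed as an element of `ℝ^k`. -/
def vecR {k : ℕ} (ρ : Fin k → ℝ) : Rd k := WithLp.toLp 2 (fun i => ρ i)

/-- `F : ℝ^d → ℝ^d` is a lift of `f : 𝕋^d → 𝕋^d`:  `π ∘ F = f ∘ π` and
`F (z + m) = F z + m` for every integer vector `m`.  The existence of such a lift
expresses that `f` is homotopic to the identity. -/
def IsLift {d : ℕ} (f : Torus d ≃ₜ Torus d) (F : Rd d ≃ₜ Rd d) : Prop :=
  (∀ z : Rd d, projT (F z) = f (projT z)) ∧
  ∀ (z : Rd d) (m : Fin d → ℤ), F (z + intVec m) = F z + intVec m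

/-- The `n`-th iterate (`n ∈ ℤ`) of a homeomorphism. -/
def iterZ {X : Type*} [TopologicalSpace X] (F : X ≃ₜ X) (n : ℤ) : X → X := ⇑(F.toEquiv ^ n)

/-- `K` is a minimal set of `f`: nonempty, compact, invariant, and every orbit in `K`
is dense in `K`. -/
def IsMinimalSet {d : ℕ} (f : Torus d ≃ₜ Torus d) (K : Set (Torus d)) : Prop :=
  K.Nonempty ∧ IsCompact K ∧ f '' K = K ∧
  ∀ x ∈ K, K ⊆ closure (Set.range fun n : ℕ => (⇑f)^[n] x)

/-- The rotation set of `F` on `K`:  all limits `(F^{nᵢ} xᵢ − xᵢ)/nᵢ → ρ` with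
`nᵢ ↗ ∞` and `xᵢ ∈ π⁻¹(K)`. -/
def rotSetOn {d : ℕ} (F : Rd d ≃ₜ Rd d) (K : Set (Torus d)) : Set (Rd d) :=
  {ρ | ∃ (n : ℕ → ℕ) (x : ℕ → Rd d), StrictMono n ∧ (∀ i, projT (x i) ∈ K) ∧
    Tendsto (fun i => (n i : ℝ)⁻¹ • ((⇑F)^[n i] (x i) - x i)) atTop (𝓝 ρ)}

/-- The affine hyperplane `lam • v + {v}^⊥`. -/
def affHyp {d : ℕ} (v : Rd d) (lam : ℝ) : Set (Rd d) :=
  {w | ∃ u : Rd d, ⟪u, v⟫ = 0 ∧ w = lam • v + u}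

/-- Bounded mean motion parallel to `v` on `K`:  `|⟨Fⁿ z − z − n ρ, v⟩| ≤ c` for all
`n ∈ ℤ` and `z ∈ π⁻¹(K)`, where `ρ = lam • v` is a point of the hyperplane
`lam • v + {v}^⊥` containing the rotation set (the value of the inner product does
not depend on the choice of `ρ` in this hyperplane). -/
def BddMeanMotionParallelOn {d : ℕ} (F : Rd d ≃ₜ Rd d) (v : Rd d) (lam : ℝ)
    (K : Set (Torus d)) : Prop :=
  ∃ c : ℝ, 0 < c ∧ ∀ (n : ℤ) (z : Rd d), projT z ∈ K →
    |⟪iterZ F n z - z - (n : ℝ) • (lam • v), v⟫| ≤ c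

lemma projT_add_intVec {d : ℕ} (z : Rd d) (m : Fin d → ℤ) :
    projT (z + intVec m) = projT z := by
  funext i
  simp only [projT, intVec, PiLp.add_apply, AddCircle.coe_add]
  have h : ((m i : ℝ) : AddCircle (1 : ℝ)) = 0 :=
    (AddCircle.coe_eq_zero_iff (1 : ℝ)).2 ⟨m i, by simp⟩
  rw [h, add_zero]

lemma exists_eq_add_intVec_of_projT_eq {d : ℕ} {z w : Rd d} (h : projT z = projT w) :
    ∃ m : Fin d → ℤ, z = w + intVec m := by
  have hi : ∀ i, ∃ k : ℤ, z i = w i + k := by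
    intro i
    have h1 : ((z i - w i : ℝ) : AddCircle (1 : ℝ)) = 0 := by
      rw [AddCircle.coe_sub, sub_eq_zero]
      exact congrFun h i
    obtain ⟨k, hk⟩ := (AddCircle.coe_eq_zero_iff (1 : ℝ)).1 h1
    refine ⟨k, ?_⟩
    simp at hk
    linarith
  choose m hm using hi
  refine ⟨m, ?_⟩
  ext i
  simpa [intVec] using hm i

lemma continuous_projT {d : ℕ} : Continuous (projT : Rd d → Torus d) := by
  refine continuous_pi fun i => ?_
  exact (AddCircle.continuous_mk' (1 : ℝ)).comp (by fun_prop)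

lemma isOpenMap_projT {d : ℕ} : IsOpenMap (projT : Rd d → Torus d) := by
  have h : IsOpenMap (Pi.map fun (_ : Fin d) (x : ℝ) => (x : AddCircle (1 : ℝ))) :=
    IsOpenMap.piMap (fun _ => QuotientAddGroup.isOpenMap_coe)
      (Filter.Eventually.of_forall fun _ => QuotientAddGroup.mk_surjective)
  exact h.comp (EuclideanSpace.equiv (Fin d) ℝ).toHomeomorph.isOpenMap

lemma surjective_projT {d : ℕ} : Function.Surjective (projT : Rd d → Torus d) := by
  intro x
  have h : ∀ i, ∃ r : ℝ, (r : AddCircle (1 : ℝ)) = x i :=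
    fun i => QuotientAddGroup.mk_surjective (x i)
  choose r hr using h
  exact ⟨vecR r, funext hr⟩

lemma inner_intVec {d : ℕ} (z : Rd d) (v : Fin d → ℤ) :
    ⟪z, intVec v⟫ = ∑ i, (v i : ℝ) * z i := by
  simp [PiLp.inner_apply, intVec]

lemma inner_intVec_intVec {d : ℕ} (m v : Fin d → ℤ) :
    ⟪intVec m, intVec v⟫ = ((∑ i, v i * m i : ℤ) : ℝ) := by
  rw [inner_intVec]
  simp [intVec]

lemma iterZ_add_intVec {d : ℕ} {F : Rd d ≃ₜ Rd d}
    (hF : ∀ (z : Rd d) (m : Fin d → ℤ), F (z + intVec m) = F z + intVec m)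
    (n : ℤ) (z : Rd d) (m : Fin d → ℤ) :
    iterZ F n (z + intVec m) = iterZ F n z + intVec m := by
  have hc : Commute F.toEquiv (Equiv.addRight (intVec m)) :=
    Equiv.ext fun z => hF z m
  exact DFunLike.congr_fun (hc.zpow_left n) z

lemma iterZ_apply_self {X : Type*} [TopologicalSpace X] (F : X ≃ₜ X) (n : ℤ) (z : X) :
    iterZ F n (F z) = iterZ F (n + 1) z := by
  simp only [iterZ, zpow_add_one]
  rfl

lemma continuous_iterZ {X : Type*} [TopologicalSpace X] (F : X ≃ₜ X) (n : ℤ) :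
    Continuous (iterZ F n) := by
  have h : iterZ F n = ⇑(F ^ n) := by
    let φ : (X ≃ₜ X) →* Equiv.Perm X :=
      { toFun := Homeomorph.toEquiv, map_one' := rfl, map_mul' := fun _ _ => rfl }
    exact congrArg DFunLike.coe (map_zpow φ F n).symm
  rw [h]
  exact (F ^ n).continuous

/-- A nonempty closed subset of the circle invariant under an irrational rotation and its
inverse is everything. -/
lemma eq_univ_of_irrational_rotation {ρ : ℝ} (hρ : Irrational ρ)
    {S : Set (AddCircle (1 : ℝ))} (hS : IsClosed S) (hne : S.Nonempty)
    (hadd : ∀ x ∈ S, x + (ρ : AddCircle (1 : ℝ)) ∈ S)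
    (hsub : ∀ x ∈ S, x - (ρ : AddCircle (1 : ℝ)) ∈ S) : S = Set.univ := by
  obtain ⟨x, hx⟩ := hne
  have horb : ∀ n : ℤ, x + n • (ρ : AddCircle (1 : ℝ)) ∈ S := by
    intro n
    induction n with
    | zero => simpa using hx
    | succ n ih => simpa [add_zsmul, add_assoc] using hadd _ ih
    | pred n ih =>
      rw [sub_zsmul, one_zsmul, ← add_assoc, ← sub_eq_add_neg]
      exact hsub _ ih
  have hd : DenseRange (· • (ρ : AddCircle (1 : ℝ)) : ℤ → AddCircle (1 : ℝ)) :=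
    AddCircle.denseRange_zsmul_coe_iff.2 (by simpa using hρ)
  refine Set.eq_univ_of_forall fun y => ?_
  have hcl : IsClosed ((fun t => x + t) ⁻¹' S) := hS.preimage (by fun_prop)
  have hy : y - x ∈ (fun t => x + t) ⁻¹' S :=
    hcl.closure_subset_iff.2 (Set.range_subset_iff.2 horb) (hd (y - x))
  simpa using hy

/-- **Proposition 2.1.**  If `f` has a minimal set `K` with rotation set contained in
the hyperplane `(ρ₀/‖v‖²) v + {v}^⊥` (where `v` is an integer vector with coprime
coordinates and `ρ₀` is irrational) and has bounded mean motion parallel to `v` on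
`K`, then `f|_K` is semi-conjugate to the one-dimensional irrational rotation
`r_{ρ₀}`, regularly with respect to some `1 × d` integer matrix `B`. -/
theorem statement1 {d : ℕ} (f : Torus d ≃ₜ Torus d) (F : Rd d ≃ₜ Rd d) (hF : IsLift f F)
    (K : Set (Torus d)) (hK : IsMinimalSet f K)
    (v : Fin d → ℤ) (hv : v ≠ 0) (hgcd : Finset.univ.gcd v = 1)
    (ρ₀ : ℝ) (hρ₀ : Irrational ρ₀)
    (hrot : rotSetOn F K ⊆ affHyp (intVec v) (ρ₀ / ‖intVec v‖ ^ 2))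
    (hbmm : BddMeanMotionParallelOn F (intVec v) (ρ₀ / ‖intVec v‖ ^ 2) K) :
    ∃ (h : Torus d → AddCircle (1 : ℝ)) (B : Fin d → ℤ),
      ContinuousOn h K ∧ h '' K = Set.univ ∧
      (∀ x ∈ K, h (f x) = h x + (ρ₀ : AddCircle (1 : ℝ))) ∧
      ∃ H : Rd d → ℝ,
        (∀ z : Rd d, projT z ∈ K → (H z : AddCircle (1 : ℝ)) = h (projT z)) ∧
        (∀ z : Rd d, projT z ∈ K → H (F z) = H z + ρ₀) ∧
        ∃ c : ℝ, ∀ z : Rd d, projT z ∈ K → |H z - ∑ i, (B i : ℝ) * z i| ≤ c := by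
  obtain ⟨hlift, hequiv⟩ := hF
  obtain ⟨hne, hcomp, hinv, hdense⟩ := hK
  obtain ⟨c, -, hc⟩ := hbmm
  have hvne : ‖intVec v‖ ≠ 0 := by
    rw [norm_ne_zero_iff]
    intro h0
    apply hv
    funext i
    have := congrArg (fun w : Rd d => w i) h0
    simpa [intVec] using this
  -- The motion of `F` parallel to `v`, corrected by the rotation by `ρ₀`.
  let a : ℤ → Rd d → ℝ := fun n z => ⟪iterZ F n z, intVec v⟫ - n * ρ₀
  have ha_cont : ∀ n, Continuous (a n) := fun n =>
    ((continuous_iterZ F n).inner continuous_const).sub continuous_const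
  have ha_F : ∀ n z, a n (F z) = a (n + 1) z + ρ₀ := by
    intro n z
    simp only [a, iterZ_apply_self]
    push_cast
    ring
  have ha_int : ∀ n z m, a n (z + intVec m) = a n z + ⟪intVec m, intVec v⟫ := by
    intro n z m
    simp only [a, iterZ_add_intVec hequiv, inner_add_left]
    ring
  have ha_bd : ∀ n z, projT z ∈ K → |a n z - ⟪z, intVec v⟫| ≤ c := by
    intro n z hz
    have h1 := hc n z hz
    have h2 : ⟪iterZ F n z - z - (n : ℝ) • ((ρ₀ / ‖intVec v‖ ^ 2) • intVec v), intVec v⟫ =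
        a n z - ⟪z, intVec v⟫ := by
      simp only [a, inner_sub_left, inner_smul_left, real_inner_self_eq_norm_sq]
      simp only [conj_trivial]
      field_simp
      ring
    rwa [h2] at h1
  have hbA : ∀ z, projT z ∈ K → BddAbove (Set.range fun n => a n z) := by
    rintro z hz
    refine ⟨⟪z, intVec v⟫ + c, ?_⟩
    rintro _ ⟨n, rfl⟩
    linarith [(abs_le.1 (ha_bd n z hz)).2]
  have hbB : ∀ z, projT z ∈ K → BddBelow (Set.range fun n => a n z) := by
    rintro z hz
    refine ⟨⟪z, intVec v⟫ - c, ?_⟩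
    rintro _ ⟨n, rfl⟩
    linarith [(abs_le.1 (ha_bd n z hz)).1]
  let H : Rd d → ℝ := fun z => ⨆ n, a n z
  let L : Rd d → ℝ := fun z => ⨅ n, a n z
  have hFK : ∀ z, projT z ∈ K → projT (F z) ∈ K := by
    intro z hz
    rw [hlift, ← hinv]
    exact Set.mem_image_of_mem _ hz
  have hH_F : ∀ z, projT z ∈ K → H (F z) = H z + ρ₀ := by
    intro z hz
    simp only [H, ha_F]
    rw [ciSup_add (hbA z hz)]
    exact (Equiv.addRight (1 : ℤ)).iSup_comp (g := fun n => a n z + ρ₀)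
  have hL_F : ∀ z, projT z ∈ K → L (F z) = L z + ρ₀ := by
    intro z hz
    simp only [L, ha_F]
    rw [ciInf_add (hbB z hz)]
    exact (Equiv.addRight (1 : ℤ)).iInf_comp (g := fun n => a n z + ρ₀)
  have hH_int : ∀ z m, projT z ∈ K → H (z + intVec m) = H z + ⟪intVec m, intVec v⟫ := by
    intro z m hz
    simp only [H, ha_int]
    rw [ciSup_add (hbA z hz)]
  have hL_int : ∀ z m, projT z ∈ K → L (z + intVec m) = L z + ⟪intVec m, intVec v⟫ := by
    intro z m hz
    simp only [L, ha_int]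
    rw [ciInf_add (hbB z hz)]
  have hH_lsc : ∀ z, ∀ ε > 0, ∀ᶠ z' in 𝓝 z, projT z' ∈ K → H z - ε < H z' := by
    intro z ε hε
    obtain ⟨n, hn⟩ := exists_lt_of_lt_ciSup (show H z - ε < ⨆ n, a n z from sub_lt_self _ hε)
    filter_upwards [(ha_cont n).continuousAt.eventually (lt_mem_nhds hn)] with z' hz' hK'
    exact hz'.trans_le (le_ciSup (hbA z' hK') n)
  have hL_usc : ∀ z, ∀ ε > 0, ∀ᶠ z' in 𝓝 z, projT z' ∈ K → L z' < L z + ε := by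
    intro z ε hε
    obtain ⟨n, hn⟩ := exists_lt_of_ciInf_lt
      (show ⨅ n, a n z < L z + ε from lt_add_of_pos_right _ hε)
    filter_upwards [(ha_cont n).continuousAt.eventually (gt_mem_nhds hn)] with z' hz' hK'
    exact (ciInf_le (hbB z' hK') n).trans_lt hz'
  -- By minimality, the oscillation `H - L` is constant over `K`.
  have hle : ∀ z z₀, projT z ∈ K → projT z₀ ∈ K → H z - L z ≤ H z₀ - L z₀ := by
    intro z z₀ hz hz₀
    have horb : ∀ n : ℕ, projT ((⇑F)^[n] z₀) = (⇑f)^[n] (projT z₀) ∧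
        projT ((⇑F)^[n] z₀) ∈ K ∧
        H ((⇑F)^[n] z₀) - L ((⇑F)^[n] z₀) = H z₀ - L z₀ := by
      intro n
      induction n with
      | zero => exact ⟨rfl, hz₀, rfl⟩
      | succ n ih =>
        obtain ⟨h1, h2, h3⟩ := ih
        rw [Function.iterate_succ_apply', Function.iterate_succ_apply', hH_F _ h2, hL_F _ h2]
        exact ⟨by rw [hlift, h1], hFK _ h2, by linarith⟩
    refine le_of_forall_pos_le_add fun ε hε => ?_
    have hnear := (hH_lsc z (ε / 2) (half_pos hε)).and (hL_usc z (ε / 2) (half_pos hε))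
    have hU := isOpenMap_projT.image_mem_nhds hnear
    obtain ⟨_, ⟨z', ⟨h1, h2⟩, hz'⟩, n, rfl⟩ := mem_closure_iff_nhds.1 (hdense _ hz₀ hz) _ hU
    obtain ⟨hp, hpK, hw⟩ := horb n
    obtain ⟨m, rfl⟩ := exists_eq_add_intVec_of_projT_eq (hz'.trans hp.symm)
    have hmK : projT ((⇑F)^[n] z₀ + intVec m) ∈ K := by rwa [projT_add_intVec]
    have h1 := h1 hmK
    have h2 := h2 hmK
    rw [hH_int _ _ hpK] at h1
    rw [hL_int _ _ hpK] at h2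
    linarith
  have hH_cont : ContinuousOn H (projT ⁻¹' K) := by
    intro z hz
    refine Metric.tendsto_nhds.2 fun ε hε => ?_
    filter_upwards [mem_nhdsWithin_of_mem_nhds (hH_lsc z ε hε),
      mem_nhdsWithin_of_mem_nhds (hL_usc z ε hε), self_mem_nhdsWithin] with z' h1 h2 hz'
    rw [Real.dist_eq, abs_lt]
    have h3 := hle z' z hz' hz
    constructor <;> linarith [h1 hz', h2 hz']
  let h : Torus d → AddCircle (1 : ℝ) := fun x =>
    (H (Function.surjInv surjective_projT x) : AddCircle (1 : ℝ))
  have hHh : ∀ z, projT z ∈ K → (H z : AddCircle (1 : ℝ)) = h (projT z) := by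
    intro z hz
    have hs := Function.surjInv_eq surjective_projT (projT z)
    obtain ⟨m, hm⟩ := exists_eq_add_intVec_of_projT_eq hs
    have hi : ((⟪intVec m, intVec v⟫ : ℝ) : AddCircle (1 : ℝ)) = 0 := by
      rw [inner_intVec_intVec]
      exact (AddCircle.coe_eq_zero_iff (1 : ℝ)).2 ⟨∑ i, v i * m i, by simp⟩
    simp only [h]
    rw [hm, hH_int _ _ hz, AddCircle.coe_add, hi, add_zero]
  have hconj : ∀ x ∈ K, h (f x) = h x + (ρ₀ : AddCircle (1 : ℝ)) := by
    intro x hx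
    obtain ⟨z, rfl⟩ := surjective_projT x
    rw [← hlift, ← hHh _ (hFK z hx), ← hHh z hx, hH_F z hx, AddCircle.coe_add]
  have hcont : ContinuousOn h K := by
    intro x hx
    obtain ⟨z, rfl⟩ := surjective_projT x
    have hmap : Filter.map projT (𝓝[projT ⁻¹' K] z) = 𝓝[K] (projT z) := by
      rw [nhdsWithin, nhdsWithin, ← isOpenMap_projT.map_nhds_eq continuous_projT.continuousAt,
        ← comap_principal, Filter.push_pull]
    rw [ContinuousWithinAt, ← hmap, tendsto_map'_iff, ← hHh z hx]
    refine Tendsto.congr' ?_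
      (((AddCircle.continuous_mk' (1 : ℝ)).tendsto _).comp (hH_cont z hx))
    filter_upwards [self_mem_nhdsWithin] with z' hz'
    exact hHh z' hz'
  refine ⟨h, v, hcont, ?_, hconj, H, hHh, hH_F, c, ?_⟩
  · refine eq_univ_of_irrational_rotation hρ₀ (hcomp.image_of_continuousOn hcont).isClosed
      (hne.image h) ?_ ?_
    · rintro _ ⟨x, hx, rfl⟩
      refine ⟨f x, ?_, hconj x hx⟩
      rw [← hinv]
      exact Set.mem_image_of_mem _ hx
    · rintro _ ⟨x, hx, rfl⟩
      rw [← hinv] at hx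
      obtain ⟨y, hy, rfl⟩ := hx
      exact ⟨y, hy, by rw [hconj y hy, add_sub_cancel_right]⟩
  · intro z hz
    rw [← inner_intVec, abs_le]
    constructor
    · have h1 := le_ciSup (hbA z hz) 0
      linarith [(abs_le.1 (ha_bd 0 z hz)).1]
    · have h1 : H z ≤ ⟪z, intVec v⟫ + c :=
        ciSup_le fun n => by linarith [(abs_le.1 (ha_bd n z hz)).2]
      linarith
end
end

section
/- Let f be a non-wandering homeomorphism of 𝕋² homotopic to the identity with lift F, and suppose the rotation set satisfies ρ(F) ⊆ ℝ × {0} and f has bounded mean motion parallel to e² = (0,1). Then there is a unique lift F̃ : 𝔸 → 𝔸 of f to the annulus 𝔸 = 𝕋¹ × ℝ satisfying sup_{n ∈ ℤ, z ∈ 𝔸} |π₂(F̃ⁿ(z)) − π₂(z)| < ∞, and this F̃ is non-wandering. -/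
open Filter Topology

local notation "⟪" x ", " y "⟫" => @inner ℝ _ _ x y

noncomputable section

/-- The open annulus `𝔸 = 𝕋¹ × ℝ`. -/
abbrev Ann := AddCircle (1 : ℝ) × ℝ

/-- `S ⊆ 𝔸` is unbounded from above in the `ℝ`-coordinate. -/
def UnbAbove (S : Set Ann) : Prop := ¬ BddAbove (Prod.snd '' S)

/-- `S ⊆ 𝔸` is unbounded from below in the `ℝ`-coordinate. -/
def UnbBelow (S : Set Ann) : Prop := ¬ BddBelow (Prod.snd '' S)

/-- `S ⊆ 𝔸` is bounded (equivalently, bounded in the `ℝ`-coordinate). -/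
def BoundedA (S : Set Ann) : Prop := BddAbove (Prod.snd '' S) ∧ BddBelow (Prod.snd '' S)

/-- `E ⊆ 𝔸` is essential: no connected component of its complement is unbounded both
above and below. -/
def EssentialA (E : Set Ann) : Prop :=
  ∀ x ∈ Eᶜ, ¬ (UnbAbove (connectedComponentIn Eᶜ x) ∧ UnbBelow (connectedComponentIn Eᶜ x))

/-- An annular continuum: a compact connected set whose complement has exactly two
connected components, both unbounded. -/
def IsAnnularContinuum (E : Set Ann) : Prop :=
  IsCompact E ∧ IsConnected E ∧
  (∀ x ∈ Eᶜ, ¬ BoundedA (connectedComponentIn Eᶜ x)) ∧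
  ∃ x y, x ∈ Eᶜ ∧ y ∈ Eᶜ ∧ connectedComponentIn Eᶜ x ≠ connectedComponentIn Eᶜ y ∧
    ∀ z ∈ Eᶜ, connectedComponentIn Eᶜ z = connectedComponentIn Eᶜ x ∨
      connectedComponentIn Eᶜ z = connectedComponentIn Eᶜ y

/-- A circloid: an annular continuum containing no strictly smaller annular continuum. -/
def IsCircloidA (C : Set Ann) : Prop :=
  IsAnnularContinuum C ∧ ∀ E ⊆ C, IsAnnularContinuum E → E = C

/-- `ℒ(U)`: the connected component of `𝔸 \ cl(U)` unbounded from below (for a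
generating set it is unique; in general we take the union of all components of
`𝔸 \ cl(U)` unbounded from below). -/
def lowerComp (U : Set Ann) : Set Ann :=
  {z | z ∈ (closure U)ᶜ ∧ UnbBelow (connectedComponentIn (closure U)ᶜ z)}

/-- `𝒰(L)`: the connected component of `𝔸 \ cl(L)` unbounded from above. -/
def upperComp (L : Set Ann) : Set Ann :=
  {z | z ∈ (closure L)ᶜ ∧ UnbAbove (connectedComponentIn (closure L)ᶜ z)}

/-- An upper generating set: bounded from below with essential closure. -/
def UpperGen (U : Set Ann) : Prop := BddBelow (Prod.snd '' U) ∧ EssentialA (closure U)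

/-- A lower generating set: bounded from above with essential closure. -/
def LowerGen (L : Set Ann) : Prop := BddAbove (Prod.snd '' L) ∧ EssentialA (closure L)

/-- `𝒞⁻(U) = 𝔸 \ (𝒰ℒ(U) ∪ ℒ𝒰ℒ(U))`. -/
def Cminus (U : Set Ann) : Set Ann :=
  (upperComp (lowerComp U) ∪ lowerComp (upperComp (lowerComp U)))ᶜ

/-- `𝒞⁺(L) = 𝔸 \ (ℒ𝒰(L) ∪ 𝒰ℒ𝒰(L))`. -/
def Cplus (L : Set Ann) : Set Ann :=
  (lowerComp (upperComp L) ∪ upperComp (lowerComp (upperComp L)))ᶜ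

/-- `f` is non-wandering: no nonempty open set `U` satisfies `fⁿ(U) ∩ U = ∅` for all
`n ≥ 1`. -/
def NonWandering {X : Type*} [TopologicalSpace X] (f : X → X) : Prop :=
  ∀ U : Set X, IsOpen U → U.Nonempty → ∃ n : ℕ, 1 ≤ n ∧ (f^[n] '' U ∩ U).Nonempty

/-- The covering map `τ : 𝔸 → 𝕋²`. -/
def tauA (z : Ann) : Torus 2 := ![z.1, (z.2 : AddCircle (1 : ℝ))]

/-- `Ft` is a lift of `f : 𝕋² → 𝕋²` to the annulus: `τ ∘ Ft = f ∘ τ`. -/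
def IsLiftToAnn (f : Torus 2 ≃ₜ Torus 2) (Ft : Ann ≃ₜ Ann) : Prop :=
  ∀ z : Ann, tauA (Ft z) = f (tauA z)

/-- The vertical displacements of all iterates of `Ft` are uniformly bounded. -/
def VertBounded (Ft : Ann ≃ₜ Ann) : Prop :=
  ∃ c : ℝ, ∀ (n : ℤ) (z : Ann), |(iterZ Ft n z).2 - z.2| ≤ c

/-- The covering map `ℝ² → 𝔸`. -/
def planeToAnn (z : Rd 2) : Ann := ((z 0 : AddCircle (1 : ℝ)), z 1)

theorem planeToAnn_isOpenQuotientMap : IsOpenQuotientMap planeToAnn := by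
  have h : IsOpenQuotientMap
      (Prod.map (fun x : ℝ => (x : AddCircle (1 : ℝ))) (id : ℝ → ℝ)) :=
    QuotientAddGroup.isOpenQuotientMap_mk.prodMap IsOpenQuotientMap.id
  exact h.comp (((EuclideanSpace.equiv (Fin 2) ℝ).toHomeomorph.trans
    Homeomorph.finTwoArrow).isOpenQuotientMap)

theorem planeToAnn_eq_iff {z w : Rd 2} :
    planeToAnn z = planeToAnn w ↔ ∃ k : ℤ, w = z + intVec ![k, 0] := by
  constructor
  · intro h
    obtain ⟨h0, h1⟩ := Prod.ext_iff.1 h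
    obtain ⟨k, hk⟩ := AddSubgroup.mem_zmultiples_iff.1 (QuotientAddGroup.eq.1 h0)
    refine ⟨k, ?_⟩
    ext i
    fin_cases i
    · simp [intVec] at hk ⊢
      linarith
    · simpa [intVec, planeToAnn] using h1.symm
  · rintro ⟨k, rfl⟩
    refine Prod.ext ?_ (by simp [planeToAnn, intVec])
    refine QuotientAddGroup.eq.2 (AddSubgroup.mem_zmultiples_iff.2 ⟨k, ?_⟩)
    simp [intVec]

theorem planeToAnn_add_vertical (z : Rd 2) (k : ℤ) :
    planeToAnn (z + intVec ![0, k]) = planeToAnn z + (0, (k : ℝ)) := by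
  simp [planeToAnn, intVec]

theorem tauA_planeToAnn (z : Rd 2) : tauA (planeToAnn z) = projT z := by
  ext i
  fin_cases i <;> rfl

theorem tauA_isOpenMap : IsOpenMap tauA := by
  have h : IsOpenMap (Prod.map (id : AddCircle (1 : ℝ) → AddCircle (1 : ℝ))
      (fun x : ℝ => (x : AddCircle (1 : ℝ)))) :=
    IsOpenMap.id.prodMap QuotientAddGroup.isOpenMap_coe
  exact Homeomorph.finTwoArrow.symm.isOpenMap.comp h

theorem tauA_eq_iff {z w : Ann} : tauA z = tauA w ↔ ∃ k : ℤ, w = z + (0, (k : ℝ)) := by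
  constructor
  · intro h
    have h0 : z.1 = w.1 := congrFun h 0
    have h1 : (z.2 : AddCircle (1 : ℝ)) = w.2 := congrFun h 1
    obtain ⟨k, hk⟩ := AddSubgroup.mem_zmultiples_iff.1 (QuotientAddGroup.eq.1 h1)
    refine ⟨k, Prod.ext (by simp [h0]) ?_⟩
    simp at hk ⊢
    linarith
  · rintro ⟨k, rfl⟩
    ext i
    fin_cases i <;> simp [tauA]

theorem IsLift.symm_add {d : ℕ} {f : Torus d ≃ₜ Torus d} {F : Rd d ≃ₜ Rd d} (hF : IsLift f F)
    (z : Rd d) (m : Fin d → ℤ) : F.symm (z + intVec m) = F.symm z + intVec m := by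
  rw [F.symm_apply_eq, hF.2, F.apply_symm_apply]

/-- The map of `𝔸` induced by a map of `ℝ²` (meaningful if it commutes with integer
translations). -/
def annMap (G : Rd 2 → Rd 2) (z : Ann) : Ann :=
  planeToAnn (G (Function.surjInv planeToAnn_isOpenQuotientMap.surjective z))

theorem annMap_planeToAnn {G : Rd 2 → Rd 2}
    (hG : ∀ z (m : Fin 2 → ℤ), G (z + intVec m) = G z + intVec m) (z : Rd 2) :
    annMap G (planeToAnn z) = planeToAnn (G z) := by
  obtain ⟨k, hk⟩ := planeToAnn_eq_iff.1
    (Function.surjInv_eq planeToAnn_isOpenQuotientMap.surjective (planeToAnn z))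
  refine planeToAnn_eq_iff.2 ⟨k, ?_⟩
  rw [← hG, ← hk]

theorem continuous_annMap {G : Rd 2 → Rd 2} (hc : Continuous G)
    (hG : ∀ z (m : Fin 2 → ℤ), G (z + intVec m) = G z + intVec m) : Continuous (annMap G) := by
  rw [planeToAnn_isOpenQuotientMap.isQuotientMap.continuous_iff]
  have h : annMap G ∘ planeToAnn = planeToAnn ∘ G := funext (annMap_planeToAnn hG)
  rw [h]
  exact planeToAnn_isOpenQuotientMap.continuous.comp hc

/-- The homeomorphism of `𝔸` induced by a lift to `ℝ²`. -/
def IsLift.annHomeo {f : Torus 2 ≃ₜ Torus 2} {F : Rd 2 ≃ₜ Rd 2} (hF : IsLift f F) :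
    Ann ≃ₜ Ann where
  toFun := annMap F
  invFun := annMap F.symm
  left_inv z := by
    obtain ⟨z, rfl⟩ := planeToAnn_isOpenQuotientMap.surjective z
    rw [annMap_planeToAnn hF.2, annMap_planeToAnn hF.symm_add, F.symm_apply_apply]
  right_inv z := by
    obtain ⟨z, rfl⟩ := planeToAnn_isOpenQuotientMap.surjective z
    rw [annMap_planeToAnn hF.symm_add, annMap_planeToAnn hF.2, F.apply_symm_apply]
  continuous_toFun := continuous_annMap F.continuous hF.2
  continuous_invFun := continuous_annMap F.symm.continuous hF.symm_add

theorem IsLift.annHomeo_planeToAnn {f : Torus 2 ≃ₜ Torus 2} {F : Rd 2 ≃ₜ Rd 2}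
    (hF : IsLift f F) (z : Rd 2) : hF.annHomeo (planeToAnn z) = planeToAnn (F z) :=
  annMap_planeToAnn hF.2 z

theorem IsLift.isLiftToAnn_annHomeo {f : Torus 2 ≃ₜ Torus 2} {F : Rd 2 ≃ₜ Rd 2}
    (hF : IsLift f F) : IsLiftToAnn f hF.annHomeo := by
  intro z
  obtain ⟨z, rfl⟩ := planeToAnn_isOpenQuotientMap.surjective z
  rw [hF.annHomeo_planeToAnn, tauA_planeToAnn, tauA_planeToAnn, hF.1]

theorem IsLift.annHomeo_add {f : Torus 2 ≃ₜ Torus 2} {F : Rd 2 ≃ₜ Rd 2}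
    (hF : IsLift f F) (z : Ann) (k : ℤ) :
    hF.annHomeo (z + (0, (k : ℝ))) = hF.annHomeo z + (0, (k : ℝ)) := by
  obtain ⟨z, rfl⟩ := planeToAnn_isOpenQuotientMap.surjective z
  rw [← planeToAnn_add_vertical, hF.annHomeo_planeToAnn, hF.2, planeToAnn_add_vertical,
    hF.annHomeo_planeToAnn]

theorem iterZ_natCast {X : Type*} [TopologicalSpace X] (F : X ≃ₜ X) (n : ℕ) :
    iterZ F n = F^[n] := by
  simp only [iterZ, zpow_natCast]
  exact Equiv.Perm.iterate_eq_pow F.toEquiv n |>.symm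

theorem iterZ_semiconj {X Y : Type*} [TopologicalSpace X] [TopologicalSpace Y] {F : X ≃ₜ X}
    {G : Y ≃ₜ Y} {q : X → Y} (h : Function.Semiconj q F G) (n : ℤ) :
    Function.Semiconj q (iterZ F n) (iterZ G n) := by
  have hnat : ∀ n : ℕ, Function.Semiconj q (iterZ F n) (iterZ G n) := fun n => by
    simpa only [iterZ_natCast] using h.iterate_right n
  obtain ⟨n, rfl | rfl⟩ := n.eq_nat_or_neg
  · exact hnat n
  · intro x
    obtain ⟨y, rfl⟩ := (F.toEquiv ^ (n : ℤ)).surjective x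
    have hy : q ((F.toEquiv ^ (n : ℤ)) y) = (G.toEquiv ^ (n : ℤ)) (q y) := hnat n y
    simp only [iterZ, zpow_neg]
    rw [hy]
    simp only [Equiv.Perm.inv_def, Equiv.symm_apply_apply]

theorem IsLift.vertBounded_annHomeo {f : Torus 2 ≃ₜ Torus 2} {F : Rd 2 ≃ₜ Rd 2}
    (hF : IsLift f F) (hbmm : BddMeanMotionParallelOn F (intVec ![0, 1]) 0 Set.univ) :
    VertBounded hF.annHomeo := by
  obtain ⟨c, -, hc⟩ := hbmm
  refine ⟨c, fun n z => ?_⟩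
  obtain ⟨z, rfl⟩ := planeToAnn_isOpenQuotientMap.surjective z
  have h : Function.Semiconj planeToAnn F hF.annHomeo := fun z =>
    (hF.annHomeo_planeToAnn z).symm
  rw [← iterZ_semiconj h n z]
  simpa [planeToAnn, intVec, PiLp.inner_apply, Fin.sum_univ_two] using hc n z trivial

theorem IsLiftToAnn.exists_eq_add {f : Torus 2 ≃ₜ Torus 2} {G G' : Ann ≃ₜ Ann}
    (hG : IsLiftToAnn f G) (hG' : IsLiftToAnn f G') :
    ∃ k : ℤ, ∀ z, G' z = G z + (0, (k : ℝ)) := by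
  choose k hk using fun z => tauA_eq_iff.1 ((hG z).trans (hG' z).symm)
  have hcont : Continuous k := by
    rw [Int.isClosedEmbedding_coe_real.isInducing.continuous_iff]
    have h : (Int.cast ∘ k : Ann → ℝ) = fun z => (G' z).2 - (G z).2 := by
      funext z
      simp [hk z]
    rw [h]
    fun_prop
  refine ⟨k 0, fun z => ?_⟩
  rw [hk z, PreconnectedSpace.constant inferInstance hcont (x := z) (y := 0)]

theorem VertBounded.eq_of_eq_add {G G' : Ann ≃ₜ Ann} (hb : VertBounded G)
    (hb' : VertBounded G') (hadd : ∀ z (k : ℤ), G (z + (0, (k : ℝ))) = G z + (0, (k : ℝ)))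
    {k : ℤ} (hk : ∀ z, G' z = G z + (0, (k : ℝ))) : G' = G := by
  obtain ⟨c, hc⟩ := hb
  obtain ⟨c', hc'⟩ := hb'
  have hiter : ∀ (n : ℕ) (z : Ann), G'^[n] z = G^[n] z + (0, ((n * k : ℤ) : ℝ)) := by
    intro n z
    induction n with
    | zero => simp
    | succ n ih =>
      rw [Function.iterate_succ_apply', Function.iterate_succ_apply', ih, hk, hadd, add_assoc]
      simp
      ring
  have hbound : ∀ n : ℕ, n * |(k : ℝ)| ≤ c + c' := by
    intro n
    have h1 := hc n 0
    have h2 := hc' n 0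
    rw [iterZ_natCast] at h1 h2
    rw [hiter] at h2
    rw [← Nat.abs_cast n, ← abs_mul]
    simp only [Prod.snd_add, Int.cast_mul, Int.cast_natCast, Prod.snd_zero, sub_zero] at h1 h2
    rw [abs_le] at *
    constructor <;> linarith
  have hk0 : k = 0 := by
    by_contra hne
    have h1 : (1 : ℝ) ≤ |(k : ℝ)| := by exact_mod_cast Int.one_le_abs hne
    obtain ⟨n, hn⟩ := exists_nat_gt (c + c')
    have hn0 : (0 : ℝ) ≤ n := n.cast_nonneg
    nlinarith [hbound n]
  ext1 z
  rw [hk, hk0]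
  simp

/-- Every nonempty open set contains a point with as many return times as desired. -/
theorem NonWandering.exists_many_returns {X : Type*} [TopologicalSpace X] {f : X → X}
    (hf : NonWandering f) (hcont : Continuous f) (m : ℕ) {W : Set X} (hW : IsOpen W)
    (hne : W.Nonempty) :
    ∃ x ∈ W, ∃ s : Finset ℕ, s.card = m ∧ ∀ t ∈ s, f^[t] x ∈ W := by
  induction m generalizing W with
  | zero =>
    obtain ⟨x, hx⟩ := hne
    exact ⟨x, hx, ∅, rfl, by simp⟩
  | succ m ih =>
    obtain ⟨n, hn, _, ⟨y, hy, rfl⟩, hy'⟩ := hf W hW hne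
    obtain ⟨x, hx, s, hs, hxs⟩ :=
      ih (hW.inter (hW.preimage (hcont.iterate n))) ⟨y, hy, hy'⟩
    refine ⟨x, hx.1, insert 0 (s.map (addLeftEmbedding n)), ?_, ?_⟩
    · rw [Finset.card_insert_of_notMem, Finset.card_map, hs]
      simp only [Finset.mem_map, addLeftEmbedding_apply, not_exists, not_and]
      intro t _ h
      omega
    · simp only [Finset.mem_insert, Finset.mem_map, addLeftEmbedding_apply]
      rintro t (rfl | ⟨t, ht, rfl⟩)
      · exact hx.1
      · rw [Function.iterate_add_apply]
        exact (hxs t ht).2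

theorem IsLiftToAnn.nonWandering {f : Torus 2 ≃ₜ Torus 2} {G : Ann ≃ₜ Ann}
    (hG : IsLiftToAnn f G) (hb : VertBounded G)
    (hadd : ∀ z (k : ℤ), G (z + (0, (k : ℝ))) = G z + (0, (k : ℝ)))
    (hf : NonWandering f) : NonWandering G := by
  intro U hU ⟨a, ha⟩
  obtain ⟨c, hc⟩ := hb
  set V : Set Ann := U ∩ Prod.snd ⁻¹' Metric.ball a.2 1
  have hV : IsOpen V := hU.inter (Metric.isOpen_ball.preimage continuous_snd)
  have hVne : V.Nonempty := ⟨a, ha, by simp⟩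
  set B : Finset ℤ := Finset.Icc (-⌈c + 2⌉) ⌈c + 2⌉
  obtain ⟨_, ⟨u, hu, rfl⟩, s, hs, hret⟩ := hf.exists_many_returns f.continuous (B.card + 1)
    (tauA_isOpenMap V hV) (hVne.image tauA)
  have hsemi : Function.Semiconj tauA G f := hG
  have hk : ∀ t ∈ s, ∃ k ∈ B, G^[t] u + (0, (k : ℝ)) ∈ V := by
    intro t ht
    obtain ⟨v, hv, hvt⟩ := hret t ht
    rw [← hsemi.iterate_right t u] at hvt
    obtain ⟨k, rfl⟩ := tauA_eq_iff.1 hvt.symm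
    refine ⟨k, ?_, hv⟩
    have h1 := hc t u
    rw [iterZ_natCast] at h1
    have h2 := hu.2
    have h3 := hv.2
    simp only [Set.mem_preimage, Metric.mem_ball, Real.dist_eq, Prod.snd_add] at h2 h3
    rw [abs_lt] at h2 h3
    rw [abs_le] at h1
    have h4 := Int.le_ceil (c + 2)
    rw [Finset.mem_Icc]
    constructor
    · have : ((-⌈c + 2⌉ : ℤ) : ℝ) ≤ k := by push_cast; linarith
      exact_mod_cast this
    · have : (k : ℝ) ≤ ⌈c + 2⌉ := by linarith
      exact_mod_cast this
  choose! k hkB hkV using hk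
  obtain ⟨t, ht, t', ht', hne, hkk⟩ := Finset.exists_ne_map_eq_of_card_lt_of_maps_to
    (by rw [hs]; exact Nat.lt_succ_self _) hkB
  wlog hlt : t < t' generalizing t t'
  · exact this t' ht' t ht hne.symm hkk.symm (by omega)
  have hadd' : Function.Semiconj (· + ((0, (k t : ℝ)) : Ann)) G G := fun z => (hadd z _).symm
  refine ⟨t' - t, by omega, _, ⟨_, (hkV t ht).1, rfl⟩, ?_⟩
  rw [← hadd'.iterate_right (t' - t) (G^[t] u), ← Function.iterate_add_apply,
    Nat.sub_add_cancel hlt.le, hkk]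
  exact (hkV t' ht').1

/-- **Lemma 3.8.**  If `f ∈ Homeo₀(𝕋²)` is non-wandering, `ρ(F) ⊆ ℝ × {0}` and `f` has
bounded mean motion parallel to `e² = (0,1)`, then there is a unique lift `F̃` of `f`
to `𝔸` with uniformly bounded vertical displacements, and this lift is non-wandering. -/
theorem statement16 (f : Torus 2 ≃ₜ Torus 2) (F : Rd 2 ≃ₜ Rd 2) (hF : IsLift f F)
    (hnw : NonWandering (⇑f))
    (hrot : ∀ w ∈ rotSetOn F Set.univ, w 1 = 0)
    (hbmm : BddMeanMotionParallelOn F (intVec ![0, 1]) 0 Set.univ) :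
    ∃ Ft : Ann ≃ₜ Ann, IsLiftToAnn f Ft ∧ VertBounded Ft ∧
      (∀ Ft' : Ann ≃ₜ Ann, IsLiftToAnn f Ft' → VertBounded Ft' → Ft' = Ft) ∧
      NonWandering (⇑Ft) := by
  exact ⟨hF.annHomeo, hF.isLiftToAnn_annHomeo, hF.vertBounded_annHomeo hbmm,
    fun _ hG' hb' =>
      let ⟨_, hk⟩ := hF.isLiftToAnn_annHomeo.exists_eq_add hG'
      (hF.vertBounded_annHomeo hbmm).eq_of_eq_add hb' hF.annHomeo_add hk,
    hF.isLiftToAnn_annHomeo.nonWandering (hF.vertBounded_annHomeo hbmm) hF.annHomeo_add hnw⟩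
end
end

section
/- Let v ∈ ℤ^d with gcd(v₁, …, v_d) = 1, and let w², …, w^d ∈ ℤ^d be vectors orthogonal to v such that there exists w¹ ∈ ℤ^d with det(w¹, w², …, w^d) = 1 (where det denotes the determinant of the d×d matrix with the given columns). Then |det(v, w², …, w^d)| = ‖v‖², where ‖v‖ is the Euclidean norm. -/
open Filter Topology

local notation "⟪" x ", " y "⟫" => @inner ℝ _ _ x y

noncomputable section

/-- If every row of `A` except the `k`-th is orthogonal to `v`, then `det A • v` is the `k`-th
column of the adjugate of `A`, scaled by the inner product of the `k`-th row with `v`. -/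
theorem det_mul_eq_dotProduct_mul_adjugate {n R : Type*} [Fintype n] [DecidableEq n] [CommRing R]
    (A : Matrix n n R) (v : n → R) (k : n) (h : ∀ i, i ≠ k → A i ⬝ᵥ v = 0) (j : n) :
    A.det * v j = (A k ⬝ᵥ v) * A.adjugate j k := by
  have hAv : A.mulVec v = Pi.single k (A k ⬝ᵥ v) := by
    ext i
    by_cases hi : i = k
    · subst hi
      simp [Matrix.mulVec]
    · simp [Matrix.mulVec, hi, h i hi]
  have key : A.adjugate.mulVec (A.mulVec v) = A.det • v := by
    rw [Matrix.mulVec_mulVec, Matrix.adjugate_mul, Matrix.smul_mulVec, Matrix.one_mulVec]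
  have hj := congrFun key j
  rw [hAv, Matrix.mulVec_single] at hj
  simpa [mul_comm] using hj.symm

/-- If `v ∈ ℤ^d` has coprime coordinates and `w², …, w^d ∈ ℤ^d` are orthogonal to `v`
such that `det(w¹, w², …, w^d) = 1` for some `w¹ ∈ ℤ^d`, then
`|det(v, w², …, w^d)| = ‖v‖²`.  Here `w 0 = w¹` and `w i = wⁱ⁺¹`; columns of the
matrices are the given vectors. -/
theorem statement18 {d : ℕ} [NeZero d] (v : Fin d → ℤ) (hgcd : Finset.univ.gcd v = 1)
    (w : Fin d → Fin d → ℤ)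
    (horth : ∀ i : Fin d, i ≠ 0 → ∑ j, w i j * v j = 0)
    (hdet : (Matrix.of fun j i : Fin d => w i j).det = 1) :
    |(((Matrix.of fun j i : Fin d => if i = 0 then v j else w i j).det : ℤ) : ℝ)| =
      ‖intVec v‖ ^ 2 := by
  have hW : (Matrix.of w).det = 1 := by
    rw [← Matrix.det_transpose]
    exact hdet
  set c : ℤ := w 0 ⬝ᵥ v
  have hv : ∀ j, v j = c * (Matrix.of w).adjugate j 0 := fun j => by
    rw [← one_mul (v j), ← hW]
    exact det_mul_eq_dotProduct_mul_adjugate (Matrix.of w) v 0 horth j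
  have hunit : |c| = 1 := by
    rw [← Int.isUnit_iff_abs_eq]
    exact isUnit_of_dvd_one (hgcd ▸ Finset.dvd_gcd fun j _ => ⟨_, hv j⟩)
  have hrow : (Matrix.of fun j i : Fin d => if i = 0 then v j else w i j).det =
      ∑ j, (Matrix.of w).adjugate j 0 * v j := by
    have hupd : (Matrix.of fun j i : Fin d => if i = 0 then v j else w i j) =
        (Matrix.of w).transpose.updateCol 0 v := by
      ext j i
      simp [Matrix.updateCol_apply]
    rw [hupd, ← Matrix.cramer_apply, Matrix.cramer_eq_adjugate_mulVec,
      ← Matrix.adjugate_transpose]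
    rfl
  have hsq : c * (Matrix.of fun j i : Fin d => if i = 0 then v j else w i j).det =
      ∑ j, v j ^ 2 := by
    rw [hrow, Finset.mul_sum]
    refine Finset.sum_congr rfl fun j _ => ?_
    rw [← mul_assoc, ← hv j, sq]
  have habs : |(Matrix.of fun j i : Fin d => if i = 0 then v j else w i j).det| =
      ∑ j, v j ^ 2 := by
    rw [← one_mul |_|, ← hunit, ← abs_mul, hsq]
    exact abs_of_nonneg (Finset.sum_nonneg fun j _ => sq_nonneg (v j))
  rw [← Int.cast_abs, habs, EuclideanSpace.real_norm_sq_eq]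
  simp [intVec]
end
end
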